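/- Let n ≥ 1 be an integer, 0 < α < n and γ > 0. Suppose 1 ≤ p₁ ≤ q₁ < n/α, 1 ≤ s ≤ t with n/(n+γ−α) < t < n/(n−α), 1/p₂ = 1/p₁ − 1/s', and 1/q₂ = 1/q₁ − 1/t', where s' and t' are the conjugate exponents of s and t. Then there exists a constant C > 0 such that for every f ∈ L^{p₁,q₁}(ℝⁿ), ||I_{α,γ}f||_{L^{p₂,q₂}} ≤ C ||K_{α,γ}||_{L^{s,t}} ||f||_{L^{p₁,q₁}}. -/

import Mathlib

open MeasureTheory Metric
open scoped ENNReal NNReal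

/-- The Riesz kernel `K_α(x) = |x|^{α-n}`. -/
noncomputable def rieszKernel (n : ℕ) (α : ℝ) (x : EuclideanSpace ℝ (Fin n)) : ℝ :=
  ‖x‖ ^ (α - (n : ℝ))

/-- The Bessel-Riesz kernel `K_{α,γ}(x) = |x|^{α-n} / (1+|x|)^γ`. -/
noncomputable def besselRieszKernel (n : ℕ) (α γ : ℝ) (x : EuclideanSpace ℝ (Fin n)) : ℝ :=
  ‖x‖ ^ (α - (n : ℝ)) / (1 + ‖x‖) ^ γ

/-- The Bessel-Riesz operator `I_{α,γ} f (x) = ∫ K_{α,γ}(x-y) f(y) dy`. -/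
noncomputable def besselRiesz (n : ℕ) (α γ : ℝ)
    (f : EuclideanSpace ℝ (Fin n) → ℝ) (x : EuclideanSpace ℝ (Fin n)) : ℝ :=
  ∫ y, besselRieszKernel n α γ (x - y) * f y

/-- The Morrey norm `‖f‖_{L^{p,q}} = sup_B |B|^{1/q-1/p} (∫_B |f|^p)^{1/p}`. -/
noncomputable def morreyNorm (n : ℕ) (p q : ℝ)
    (f : EuclideanSpace ℝ (Fin n) → ℝ) : ℝ≥0∞ :=
  ⨆ (a : EuclideanSpace ℝ (Fin n)) (R : ℝ) (_ : 0 < R),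
    volume (ball a R) ^ (1 / q - 1 / p) *
      (∫⁻ x in ball a R, ENNReal.ofReal (|f x| ^ p)) ^ (1 / p)

/-- The generalized Morrey norm
`‖f‖_{L^{p,φ}} = sup_B (1/φ(R)) ((1/|B|) ∫_B |f|^p)^{1/p}`. -/
noncomputable def gMorreyNorm (n : ℕ) (p : ℝ) (φ : ℝ → ℝ)
    (f : EuclideanSpace ℝ (Fin n) → ℝ) : ℝ≥0∞ :=
  ⨆ (a : EuclideanSpace ℝ (Fin n)) (R : ℝ) (_ : 0 < R),
    (ENNReal.ofReal (φ R))⁻¹ *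
      ((volume (ball a R))⁻¹ * ∫⁻ x in ball a R, ENNReal.ofReal (|f x| ^ p)) ^ (1 / p)

/-- `φ : (0,∞) → (0,∞)` is of class `G_p`: positive on `(0,∞)`, almost decreasing, and
`r ↦ φ(r)^p r^n` is almost increasing. -/
def IsClassG (n : ℕ) (p : ℝ) (φ : ℝ → ℝ) : Prop :=
  (∀ r : ℝ, 0 < r → 0 < φ r) ∧
  (∃ C : ℝ, 0 < C ∧ ∀ r s : ℝ, 0 < r → r ≤ s → C * φ s ≤ φ r) ∧
  (∃ C : ℝ, 0 < C ∧ ∀ r s : ℝ, 0 < r → r ≤ s →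
    φ r ^ p * r ^ (n : ℝ) ≤ C * (φ s ^ p * s ^ (n : ℝ)))

/-- `ρ` is almost increasing on `(0,∞)`. -/
def IsAlmostIncreasing (ρ : ℝ → ℝ) : Prop :=
  ∃ C : ℝ, 0 < C ∧ ∀ r s : ℝ, 0 < r → r ≤ s → ρ r ≤ C * ρ s

/-- Operator norm of `I_{α,γ}` from `L^{p₁,φ}` to `L^{p₂,ψ}`. -/
noncomputable def besselRieszOpNormGM (n : ℕ) (α γ p₁ p₂ : ℝ) (φ ψ : ℝ → ℝ) : ℝ≥0∞ :=
  ⨆ f : {f : EuclideanSpace ℝ (Fin n) → ℝ //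
      Measurable f ∧ gMorreyNorm n p₁ φ f ≠ 0 ∧ gMorreyNorm n p₁ φ f ≠ ⊤},
    gMorreyNorm n p₂ ψ (besselRiesz n α γ f.1) / gMorreyNorm n p₁ φ f.1

/-! Fix a ball `B(a, R)` and split the convolution at distance `R` from the point of evaluation.
On `B(a, R)` the near part only sees `f` on `B(a, 2R)` and the kernel on `B(0, R)`, so Young's
inequality for the truncated functions bounds its `L^{p₂}` norm. For the far part, comparing a
radially nonincreasing kernel with its `L^s` average over `B(0, ρ)` gives
`k(x) ≤ ‖k‖_{L^{s,t}} |B(0, ρ)|^{-1/t}` for `|x| ≥ ρ`. On the dyadic annulus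
`2^m R ≤ |x - y| < 2^{m+1} R` this and Hölder's inequality for `f` produce a term of size
`|B(0, 2^m R)|^{-1/q₂}`, and these sum as a geometric series because `q₂ > 0`. -/

section Young

theorem lintegral_mul_le_rpow_mul_rpow_mul_rpow {α : Type*} [MeasurableSpace α] {μ : Measure α}
    {p s r : ℝ} (hp : 1 ≤ p) (hs : 1 ≤ s) (hr : 0 < r) (hpsr : 1 / r = 1 / p - (1 - 1 / s))
    {u v : α → ℝ≥0∞} (hu : AEMeasurable u μ) (hv : AEMeasurable v μ) :
    ∫⁻ a, u a * v a ∂μ ≤ (∫⁻ a, u a ^ p * v a ^ s ∂μ) ^ (1 / r) *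
      (∫⁻ a, u a ^ p ∂μ) ^ (1 / p - 1 / r) * (∫⁻ a, v a ^ s ∂μ) ^ (1 / s - 1 / r) := by
  have hp₀ : 0 < p := by linarith
  have hs₀ : 0 < s := by linarith
  have hr₀ : 0 ≤ 1 / r := by positivity
  have hpr : 0 ≤ 1 / p - 1 / r := by linarith [(div_le_one hs₀).2 hs]
  have hsr : 0 ≤ 1 / s - 1 / r := by linarith [(div_le_one hp₀).2 hp]
  have factor {e : ℝ} (he : 0 < e) (her : 0 ≤ 1 / e - 1 / r) (w : ℝ≥0∞) :
      w = (w ^ e) ^ (1 / r) * (w ^ e) ^ (1 / e - 1 / r) := by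
    rw [← ENNReal.rpow_add_of_nonneg _ _ hr₀ her, add_sub_cancel, ← ENNReal.rpow_mul,
      mul_one_div_cancel he.ne', ENNReal.rpow_one]
  have holder := ENNReal.lintegral_prod_norm_pow_le (μ := μ) (Finset.univ : Finset (Fin 3))
    (f := ![fun a ↦ u a ^ p * v a ^ s, fun a ↦ u a ^ p, fun a ↦ v a ^ s])
    (p := ![1 / r, 1 / p - 1 / r, 1 / s - 1 / r])
    (by simpa [Fin.forall_fin_succ] using
      ⟨(hu.pow_const p).mul (hv.pow_const s), hu.pow_const p, hv.pow_const s⟩)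
    (by simp only [Fin.sum_univ_three, Matrix.cons_val]; linarith)
    (by
      intro i _
      fin_cases i
      exacts [hr₀, hpr, hsr])
  simp only [Fin.prod_univ_three, Matrix.cons_val_zero, Matrix.cons_val_one,
    Matrix.cons_val] at holder
  refine (lintegral_congr fun a ↦ ?_).trans_le holder
  rw [ENNReal.mul_rpow_of_nonneg _ _ hr₀]
  nth_rewrite 1 [factor hp₀ hpr (u a), factor hs₀ hsr (v a)]
  ring

variable {G : Type*} [AddGroup G] [MeasurableSpace G] [MeasurableAdd₂ G] [MeasurableNeg G]
  {μ : Measure G} [SFinite μ] [μ.IsAddLeftInvariant]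

theorem lintegral_lconvolution {f g : G → ℝ≥0∞} (hf : AEMeasurable f μ) (hg : AEMeasurable g μ) :
    ∫⁻ x, (f ⋆ₗ[μ] g) x ∂μ = (∫⁻ x, f x ∂μ) * ∫⁻ x, g x ∂μ := by
  simp only [lconvolution_def]
  rw [lintegral_lintegral_swap (by fun_prop)]
  have inner (y : G) : ∫⁻ x, f y * g (-y + x) ∂μ = f y * ∫⁻ x, g x ∂μ := by
    rw [lintegral_add_left_eq_self (fun x ↦ f y * g x), lintegral_const_mul'' _ hg]
  simp only [inner]
  exact lintegral_mul_const'' _ hf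

theorem eLpNorm'_lconvolution_le [μ.IsAddRightInvariant] [μ.IsNegInvariant]
    {p s r : ℝ} (hp : 1 ≤ p) (hs : 1 ≤ s) (hr : 0 < r) (hpsr : 1 / r = 1 / p - (1 - 1 / s))
    {f g : G → ℝ≥0∞} (hf : AEMeasurable f μ) (hg : AEMeasurable g μ) :
    eLpNorm' (f ⋆ₗ[μ] g) r μ ≤ eLpNorm' f p μ * eLpNorm' g s μ := by
  have hr₀ : 0 < 1 / r := by positivity
  have hpr : 0 ≤ 1 / p - 1 / r := by linarith [(div_le_one (by linarith : 0 < s)).2 hs]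
  have hsr : 0 ≤ 1 / s - 1 / r := by linarith [(div_le_one (by linarith : 0 < p)).2 hp]
  have hfp : AEMeasurable (fun x ↦ f x ^ p) μ := hf.pow_const p
  have hgs : AEMeasurable (fun x ↦ g x ^ s) μ := hg.pow_const s
  simp only [eLpNorm', enorm_eq_self]
  set A := ∫⁻ x, f x ^ p ∂μ
  set B := ∫⁻ x, g x ^ s ∂μ
  set c := A ^ (1 / p - 1 / r) * B ^ (1 / s - 1 / r) with hc
  have pointwise (x : G) :
      (f ⋆ₗ[μ] g) x ^ r ≤ ((fun y ↦ f y ^ p) ⋆ₗ[μ] fun y ↦ g y ^ s) x * c ^ r := by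
    have reflect : ∫⁻ y, g (-y + x) ^ s ∂μ = B := by
      rw [lintegral_neg_eq_self fun y ↦ g (y + x) ^ s, lintegral_add_right_eq_self fun y ↦ g y ^ s]
    have hgx : AEMeasurable (fun y ↦ g (-y + x)) μ :=
      hg.comp_quasiMeasurePreserving ((measurePreserving_add_right μ x).comp
        (Measure.measurePreserving_neg μ)).quasiMeasurePreserving
    have := lintegral_mul_le_rpow_mul_rpow_mul_rpow hp hs hr hpsr hf hgx
    rw [reflect, mul_assoc] at this
    refine (ENNReal.rpow_le_rpow this hr.le).trans_eq ?_
    rw [ENNReal.mul_rpow_of_nonneg _ _ hr.le, ← ENNReal.rpow_mul, one_div_mul_cancel hr.ne',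
      ENNReal.rpow_one, lconvolution_def]
  calc (∫⁻ x, (f ⋆ₗ[μ] g) x ^ r ∂μ) ^ (1 / r)
      ≤ (A * B * c ^ r) ^ (1 / r) := by
        gcongr
        rw [← lintegral_lconvolution hfp hgs,
          ← lintegral_mul_const'' _ (aemeasurable_lconvolution hfp hgs)]
        exact lintegral_mono pointwise
    _ = (A ^ (1 / r) * A ^ (1 / p - 1 / r)) * (B ^ (1 / r) * B ^ (1 / s - 1 / r)) := by
        rw [ENNReal.mul_rpow_of_nonneg _ _ hr₀.le, ENNReal.mul_rpow_of_nonneg _ _ hr₀.le,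
          ← ENNReal.rpow_mul, mul_one_div_cancel hr.ne', ENNReal.rpow_one, hc]
        ring
    _ = A ^ (1 / p) * B ^ (1 / s) := by
        simp only [← ENNReal.rpow_add_of_nonneg _ _ hr₀.le, hpr, hsr, add_sub_cancel]

theorem eLpNorm'_indicator {α ε : Type*} [MeasurableSpace α] {ν : Measure α}
    [TopologicalSpace ε] [ESeminormedAddMonoid ε] {q : ℝ} (hq : 0 < q)
    {A : Set α} (hA : MeasurableSet A) (f : α → ε) :
    eLpNorm' (A.indicator f) q ν = eLpNorm' f q (ν.restrict A) := by
  simp only [eLpNorm', ← lintegral_indicator hA]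
  congr 2 with x
  by_cases hx : x ∈ A <;> simp [hx, hq]

end Young

section Truncation

variable {E : Type*} [SeminormedAddCommGroup E] [MeasurableSpace E] [BorelSpace E] {μ : Measure E}

theorem setLIntegral_ball_mul_eq_lconvolution_indicator (f k : E → ℝ≥0∞) (x : E) (R : ℝ) :
    ∫⁻ y in ball x R, f y * k (x - y) ∂μ = (f ⋆ₗ[μ] (ball 0 R).indicator k) x := by
  rw [lconvolution_def, ← lintegral_indicator measurableSet_ball]
  refine lintegral_congr fun y ↦ ?_
  have mem_iff : x - y ∈ ball 0 R ↔ y ∈ ball x R := by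
    rw [mem_ball_zero_iff, mem_ball', dist_eq_norm]
  by_cases hy : y ∈ ball x R <;>
    simp only [neg_add_eq_sub, Set.indicator, mem_iff, hy, if_true, if_false, mul_zero]

theorem eLpNorm'_setLIntegral_ball_mul_le [SecondCountableTopology E] [SFinite μ]
    [μ.IsAddLeftInvariant] [μ.IsNegInvariant]
    {p s r : ℝ} (hp : 1 ≤ p) (hs : 1 ≤ s) (hr : 0 < r) (hpsr : 1 / r = 1 / p - (1 - 1 / s))
    {f k : E → ℝ≥0∞} (hf : AEMeasurable f μ) (hk : AEMeasurable k μ) (a : E) (R : ℝ) :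
    eLpNorm' (fun x ↦ ∫⁻ y in ball x R, f y * k (x - y) ∂μ) r (μ.restrict (ball a R)) ≤
      eLpNorm' f p (μ.restrict (ball a (2 * R))) * eLpNorm' k s (μ.restrict (ball 0 R)) := by
  have truncate : ∀ x ∈ ball a R, ∫⁻ y in ball x R, f y * k (x - y) ∂μ ≤
      ((ball a (2 * R)).indicator f ⋆ₗ[μ] (ball 0 R).indicator k) x := by
    intro x hx
    rw [← setLIntegral_ball_mul_eq_lconvolution_indicator]
    refine setLIntegral_mono' measurableSet_ball fun y hy ↦ ?_
    have hya : y ∈ ball a (2 * R) := by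
      rw [mem_ball] at hx hy ⊢
      linarith [dist_triangle y x a]
    rw [Set.indicator_of_mem hya]
  rw [← eLpNorm'_indicator (zero_lt_one.trans_le hp) measurableSet_ball,
    ← eLpNorm'_indicator (zero_lt_one.trans_le hs) measurableSet_ball]
  calc _ ≤ eLpNorm' ((ball a (2 * R)).indicator f ⋆ₗ[μ] (ball 0 R).indicator k) r
          (μ.restrict (ball a R)) :=
        eLpNorm'_mono_enorm_ae hr.le <| ae_restrict_of_forall_mem measurableSet_ball truncate
    _ ≤ eLpNorm' ((ball a (2 * R)).indicator f ⋆ₗ[μ] (ball 0 R).indicator k) r μ :=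
        eLpNorm'_mono_measure _ Measure.restrict_le_self hr.le
    _ ≤ _ := eLpNorm'_lconvolution_le hp hs hr hpsr (hf.indicator measurableSet_ball)
        (hk.indicator measurableSet_ball)

end Truncation

section Morrey

/-- The Morrey norm of `f` with respect to a measure `μ`, with values in `[0, ∞]`. For a real-valued
function on `EuclideanSpace ℝ (Fin n)` and `0 < p` this is `morreyNorm n p q f`; the general
form also applies to `ℝ≥0∞`-valued functions, such as `fun x ↦ ‖f x‖ₑ`. -/
noncomputable def morreyENorm {E ε : Type*} [PseudoMetricSpace E] [MeasurableSpace E] [ENorm ε]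
    (p q : ℝ) (f : E → ε) (μ : Measure E) : ℝ≥0∞ :=
  ⨆ (a : E) (R : ℝ) (_ : 0 < R),
    μ (ball a R) ^ (1 / q - 1 / p) * eLpNorm' f p (μ.restrict (ball a R))

theorem morreyNorm_eq_morreyENorm {n : ℕ} {p : ℝ} (hp : 0 < p) (q : ℝ)
    (f : EuclideanSpace ℝ (Fin n) → ℝ) : morreyNorm n p q f = morreyENorm p q f volume := by
  simp only [morreyNorm, morreyENorm, eLpNorm', Real.enorm_eq_ofReal_abs,
    ENNReal.ofReal_rpow_of_nonneg (abs_nonneg _) hp.le]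

theorem morreyENorm_enorm {E ε : Type*} [PseudoMetricSpace E] [MeasurableSpace E]
    [ENorm ε] (p q : ℝ) (f : E → ε) (μ : Measure E) :
    morreyENorm p q (fun x ↦ ‖f x‖ₑ) μ = morreyENorm p q f μ := by
  simp only [morreyENorm, eLpNorm'_enorm]

theorem morreyENorm_mono {E ε ε' : Type*} [PseudoMetricSpace E] [MeasurableSpace E]
    [ENorm ε] [ENorm ε']
    {p : ℝ} (hp : 0 ≤ p) (q : ℝ) {f : E → ε} {g : E → ε'} {μ : Measure E}
    (hfg : ∀ x, ‖f x‖ₑ ≤ ‖g x‖ₑ) : morreyENorm p q f μ ≤ morreyENorm p q g μ :=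
  iSup₂_mono fun _ _ ↦ iSup_mono fun _ ↦
    mul_le_mul_right (eLpNorm'_mono_enorm_ae hp <| .of_forall hfg) _

variable {E ε : Type*} [PseudoMetricSpace E] [ProperSpace E] [MeasurableSpace E]
  {μ : Measure E} [μ.IsOpenPosMeasure] [IsFiniteMeasureOnCompacts μ] {p : ℝ}

theorem eLpNorm'_ball_le_morreyENorm_mul [ENorm ε] (p q : ℝ) (f : E → ε) (a : E) {R : ℝ}
    (hR : 0 < R) :
    eLpNorm' f p (μ.restrict (ball a R)) ≤
      morreyENorm p q f μ * μ (ball a R) ^ (1 / p - 1 / q) := by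
  have bound : μ (ball a R) ^ (1 / q - 1 / p) * eLpNorm' f p (μ.restrict (ball a R)) ≤
      morreyENorm p q f μ :=
    le_iSup_of_le a (le_iSup₂_of_le R hR le_rfl)
  have hV₀ : μ (ball a R) ≠ 0 := (measure_ball_pos μ a hR).ne'
  calc eLpNorm' f p (μ.restrict (ball a R))
      = μ (ball a R) ^ (1 / q - 1 / p) * eLpNorm' f p (μ.restrict (ball a R)) *
          μ (ball a R) ^ (1 / p - 1 / q) := by
        rw [mul_right_comm, ← ENNReal.rpow_add _ _ hV₀ measure_ball_lt_top.ne]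
        simp
    _ ≤ morreyENorm p q f μ * μ (ball a R) ^ (1 / p - 1 / q) := by gcongr

theorem setLIntegral_ball_enorm_le_morreyENorm_mul [TopologicalSpace ε] [ContinuousENorm ε]
    (hp : 1 ≤ p) (q : ℝ) {f : E → ε} (hf : AEStronglyMeasurable f μ) (a : E) {R : ℝ} (hR : 0 < R) :
    ∫⁻ x in ball a R, ‖f x‖ₑ ∂μ ≤ morreyENorm p q f μ * μ (ball a R) ^ (1 - 1 / q) := by
  calc ∫⁻ x in ball a R, ‖f x‖ₑ ∂μ
      = eLpNorm' f 1 (μ.restrict (ball a R)) := by simp [eLpNorm']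
    _ ≤ eLpNorm' f p (μ.restrict (ball a R)) * μ (ball a R) ^ (1 / 1 - 1 / p) := by
        simpa only [Measure.restrict_apply_univ] using
          eLpNorm'_le_eLpNorm'_mul_rpow_measure_univ one_pos hp hf.restrict
    _ ≤ morreyENorm p q f μ * μ (ball a R) ^ (1 / p - 1 / q) *
          μ (ball a R) ^ (1 / 1 - 1 / p) := by
        gcongr
        exact eLpNorm'_ball_le_morreyENorm_mul p q f a hR
    _ = morreyENorm p q f μ * μ (ball a R) ^ (1 - 1 / q) := by
        rw [mul_assoc, ← ENNReal.rpow_add _ _ (measure_ball_pos μ a hR).ne' measure_ball_lt_top.ne]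
        congr 2
        ring

end Morrey

/-- A function that is nonincreasing in the norm of its argument. The origin is left out, because
the value at `0` of a singular kernel is a junk value. -/
def RadiallyAntitone {E β : Type*} [Zero E] [Norm E] [Preorder β] (k : E → β) : Prop :=
  ∀ ⦃x y : E⦄, x ≠ 0 → ‖x‖ ≤ ‖y‖ → k y ≤ k x

theorem radiallyAntitone_enorm_besselRieszKernel {n : ℕ} {α γ : ℝ} (hα : α ≤ n) (hγ : 0 ≤ γ) :
    RadiallyAntitone fun x ↦ ‖besselRieszKernel n α γ x‖ₑ := by
  intro x y hx hxy
  have hx₀ : 0 < ‖x‖ := norm_pos_iff.2 hx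
  have power_le := Real.rpow_le_rpow_of_nonpos hx₀ hxy (sub_nonpos.2 hα)
  rw [enorm_le_iff_norm_le, Real.norm_of_nonneg (by unfold besselRieszKernel; positivity),
    Real.norm_of_nonneg (by unfold besselRieszKernel; positivity)]
  unfold besselRieszKernel
  gcongr

theorem measurable_besselRieszKernel (n : ℕ) (α γ : ℝ) : Measurable (besselRieszKernel n α γ) := by
  unfold besselRieszKernel
  fun_prop

theorem compl_ball_subset_iUnion_dyadic_annulus {X : Type*} [PseudoMetricSpace X] (x : X) {R : ℝ}
    (hR : 0 < R) :
    (ball x R)ᶜ ⊆ ⋃ m : ℕ, ball x (2 * (2 ^ m * R)) \ ball x (2 ^ m * R) := by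
  intro y hy
  have one_le : 1 ≤ dist y x / R := by simpa [le_div_iff₀ hR] using hy
  obtain ⟨m, hm, hm'⟩ := exists_nat_pow_near one_le one_lt_two
  rw [le_div_iff₀ hR] at hm
  rw [div_lt_iff₀ hR, pow_succ', mul_assoc] at hm'
  exact Set.mem_iUnion.2 ⟨m, hm', hm.not_gt⟩

section RadialKernel

variable {E : Type*} [NormedAddCommGroup E] [NormedSpace ℝ E] [FiniteDimensional ℝ E]
  [MeasurableSpace E] [BorelSpace E] {μ : Measure E} [μ.IsAddHaarMeasure]

theorem measure_ball_two_mul (x : E) (R : ℝ) :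
    μ (ball x (2 * R)) = 2 ^ Module.finrank ℝ E * μ (ball 0 R) := by
  simp [Measure.addHaar_ball_mul_of_pos μ x two_pos R, ENNReal.ofReal_pow]

theorem measure_ball_zero_two_pow_mul (m : ℕ) (R : ℝ) :
    μ (ball (0 : E) (2 ^ m * R)) = (2 ^ Module.finrank ℝ E) ^ m * μ (ball 0 R) := by
  induction m with
  | zero => simp
  | succ m ih => rw [pow_succ', mul_assoc, measure_ball_two_mul, ih, pow_succ', mul_assoc]

theorem RadiallyAntitone.le_morreyENorm_mul [Nontrivial E] {k : E → ℝ≥0∞}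
    (hk : RadiallyAntitone k) {s : ℝ} (hs : 0 < s) (t : ℝ) {R : ℝ} (hR : 0 < R) {x : E}
    (hx : R ≤ ‖x‖) : k x ≤ morreyENorm s t k μ * μ (ball 0 R) ^ (-(1 / t)) := by
  set V := μ (ball (0 : E) R)
  have hV₀ : V ≠ 0 := (measure_ball_pos μ _ hR).ne'
  have hV : V ≠ ⊤ := measure_ball_lt_top.ne
  have average_le : k x * V ^ (1 / s) ≤ eLpNorm' k s (μ.restrict (ball 0 R)) := by
    have h := eLpNorm'_const (μ := μ.restrict (ball 0 R)) (k x) hs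
    rw [Measure.restrict_apply_univ, enorm_eq_self] at h
    rw [← h]
    refine eLpNorm'_mono_enorm_ae hs.le ?_
    filter_upwards [ae_restrict_of_ae (Measure.ae_ne μ 0), ae_restrict_mem measurableSet_ball]
      with z hz hzR
    exact hk hz ((mem_ball_zero_iff.1 hzR).le.trans hx)
  calc k x = k x * V ^ (1 / s) * V ^ (-(1 / s)) := by
        rw [mul_assoc, ← ENNReal.rpow_add _ _ hV₀ hV, add_neg_cancel, ENNReal.rpow_zero, mul_one]
    _ ≤ morreyENorm s t k μ * V ^ (1 / s - 1 / t) * V ^ (-(1 / s)) := by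
        gcongr ?_ * _
        exact average_le.trans (eLpNorm'_ball_le_morreyENorm_mul s t k 0 hR)
    _ = morreyENorm s t k μ * V ^ (-(1 / t)) := by
        rw [mul_assoc, ← ENNReal.rpow_add _ _ hV₀ hV]
        congr 2
        ring

variable {p₁ q₁ p₂ q₂ s t : ℝ} {f k : E → ℝ≥0∞}

theorem setLIntegral_annulus_mul_le [Nontrivial E] (hp₁ : 1 ≤ p₁) (hs : 0 < s)
    (hq₂ : 1 / q₂ = 1 / q₁ - (1 - 1 / t)) (hf : AEMeasurable f μ) (hk : RadiallyAntitone k)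
    (x : E) {R : ℝ} (hR : 0 < R) :
    ∫⁻ y in ball x (2 * R) \ ball x R, f y * k (x - y) ∂μ ≤
      (2 ^ Module.finrank ℝ E) ^ (1 - 1 / q₁) * morreyENorm s t k μ * morreyENorm p₁ q₁ f μ *
        μ (ball 0 R) ^ (-(1 / q₂)) := by
  set V := μ (ball (0 : E) R)
  set K := morreyENorm s t k μ
  set F := morreyENorm p₁ q₁ f μ
  set D : ℝ≥0∞ := 2 ^ Module.finrank ℝ E
  have hV₀ : V ≠ 0 := (measure_ball_pos μ _ hR).ne'
  have hV : V ≠ ⊤ := measure_ball_lt_top.ne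
  have kernel_le : ∀ y ∈ ball x (2 * R) \ ball x R, k (x - y) ≤ K * V ^ (-(1 / t)) := by
    intro y hy
    refine hk.le_morreyENorm_mul hs t hR ?_
    simpa [dist_eq_norm, norm_sub_rev] using hy.2
  have mass_le : ∫⁻ y in ball x (2 * R), f y ∂μ ≤ F * (D * V) ^ (1 - 1 / q₁) := by
    simpa only [enorm_eq_self, measure_ball_two_mul] using
      setLIntegral_ball_enorm_le_morreyENorm_mul hp₁ q₁ hf.aestronglyMeasurable x
        (mul_pos two_pos hR)
  calc ∫⁻ y in ball x (2 * R) \ ball x R, f y * k (x - y) ∂μ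
      ≤ ∫⁻ y in ball x (2 * R) \ ball x R, f y * (K * V ^ (-(1 / t))) ∂μ :=
        setLIntegral_mono' (measurableSet_ball.diff measurableSet_ball) fun y hy ↦
          mul_le_mul_right (kernel_le y hy) _
    _ ≤ ∫⁻ y in ball x (2 * R), f y * (K * V ^ (-(1 / t))) ∂μ :=
        lintegral_mono_set Set.sdiff_subset
    _ = (∫⁻ y in ball x (2 * R), f y ∂μ) * (K * V ^ (-(1 / t))) :=
        lintegral_mul_const'' _ hf.restrict
    _ ≤ F * (D * V) ^ (1 - 1 / q₁) * (K * V ^ (-(1 / t))) := by gcongr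
    _ = D ^ (1 - 1 / q₁) * K * F * (V ^ (1 - 1 / q₁) * V ^ (-(1 / t))) := by
        rw [ENNReal.mul_rpow_of_ne_top (by finiteness) hV]
        ring
    _ = D ^ (1 - 1 / q₁) * K * F * V ^ (-(1 / q₂)) := by
        rw [← ENNReal.rpow_add _ _ hV₀ hV, hq₂]
        congr 2
        ring

theorem setLIntegral_compl_ball_mul_le [Nontrivial E] (hp₁ : 1 ≤ p₁) (hs : 0 < s)
    (hq₂ : 1 / q₂ = 1 / q₁ - (1 - 1 / t)) (hf : AEMeasurable f μ) (hk : RadiallyAntitone k)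
    (x : E) {R : ℝ} (hR : 0 < R) :
    ∫⁻ y in (ball x R)ᶜ, f y * k (x - y) ∂μ ≤
      (2 ^ Module.finrank ℝ E) ^ (1 - 1 / q₁) *
        (1 - (2 ^ Module.finrank ℝ E) ^ (-(1 / q₂)))⁻¹ *
        morreyENorm s t k μ * morreyENorm p₁ q₁ f μ * μ (ball 0 R) ^ (-(1 / q₂)) := by
  set V := μ (ball (0 : E) R)
  set K := morreyENorm s t k μ
  set F := morreyENorm p₁ q₁ f μ
  set D : ℝ≥0∞ := 2 ^ Module.finrank ℝ E with hD
  have dyadic_volume (m : ℕ) :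
      μ (ball (0 : E) (2 ^ m * R)) ^ (-(1 / q₂)) = V ^ (-(1 / q₂)) * (D ^ (-(1 / q₂))) ^ m := by
    rw [measure_ball_zero_two_pow_mul,
      ENNReal.mul_rpow_of_ne_top (by finiteness) measure_ball_lt_top.ne, ← hD,
      ← ENNReal.rpow_natCast D, ← ENNReal.rpow_natCast _ m, ← ENNReal.rpow_mul,
      ← ENNReal.rpow_mul, mul_comm (m : ℝ), mul_comm]
  calc ∫⁻ y in (ball x R)ᶜ, f y * k (x - y) ∂μ
      ≤ ∑' m : ℕ, ∫⁻ y in ball x (2 * (2 ^ m * R)) \ ball x (2 ^ m * R), f y * k (x - y) ∂μ :=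
        (lintegral_mono_set (compl_ball_subset_iUnion_dyadic_annulus x hR)).trans
          (lintegral_iUnion_le _ _)
    _ ≤ ∑' m : ℕ, D ^ (1 - 1 / q₁) * K * F * (V ^ (-(1 / q₂)) * (D ^ (-(1 / q₂))) ^ m) := by
        refine ENNReal.tsum_le_tsum fun m ↦ ?_
        rw [← dyadic_volume]
        exact setLIntegral_annulus_mul_le hp₁ hs hq₂ hf hk x (by positivity)
    _ = D ^ (1 - 1 / q₁) * (1 - D ^ (-(1 / q₂)))⁻¹ * K * F * V ^ (-(1 / q₂)) := by
        rw [ENNReal.tsum_mul_left, ENNReal.tsum_mul_left, ENNReal.tsum_geometric]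
        ring

theorem eLpNorm'_setLIntegral_ball_mul_le_morreyENorm_mul (hp₁ : 1 ≤ p₁) (hs : 1 ≤ s)
    (hp₂_pos : 0 < p₂) (hp₂ : 1 / p₂ = 1 / p₁ - (1 - 1 / s)) (hq₂ : 1 / q₂ = 1 / q₁ - (1 - 1 / t))
    (hf : AEMeasurable f μ) (hk : AEMeasurable k μ) (a : E) {R : ℝ} (hR : 0 < R) :
    eLpNorm' (fun x ↦ ∫⁻ y in ball x R, f y * k (x - y) ∂μ) p₂ (μ.restrict (ball a R)) ≤
      (2 ^ Module.finrank ℝ E) ^ (1 / p₁ - 1 / q₁) * morreyENorm s t k μ *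
        morreyENorm p₁ q₁ f μ * μ (ball 0 R) ^ (1 / p₂ - 1 / q₂) := by
  set V := μ (ball (0 : E) R)
  set K := morreyENorm s t k μ
  set F := morreyENorm p₁ q₁ f μ
  set D : ℝ≥0∞ := 2 ^ Module.finrank ℝ E
  have hV₀ : V ≠ 0 := (measure_ball_pos μ _ hR).ne'
  have hV : V ≠ ⊤ := measure_ball_lt_top.ne
  have f_le := eLpNorm'_ball_le_morreyENorm_mul (μ := μ) p₁ q₁ f a (mul_pos two_pos hR)
  rw [measure_ball_two_mul] at f_le
  calc _ ≤ eLpNorm' f p₁ (μ.restrict (ball a (2 * R))) * eLpNorm' k s (μ.restrict (ball 0 R)) :=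
        eLpNorm'_setLIntegral_ball_mul_le hp₁ hs hp₂_pos hp₂ hf hk a R
    _ ≤ F * (D * V) ^ (1 / p₁ - 1 / q₁) * (K * V ^ (1 / s - 1 / t)) :=
        mul_le_mul' f_le (eLpNorm'_ball_le_morreyENorm_mul s t k 0 hR)
    _ = D ^ (1 / p₁ - 1 / q₁) * K * F * (V ^ (1 / p₁ - 1 / q₁) * V ^ (1 / s - 1 / t)) := by
        rw [ENNReal.mul_rpow_of_ne_top (by finiteness) hV]
        ring
    _ = D ^ (1 / p₁ - 1 / q₁) * K * F * V ^ (1 / p₂ - 1 / q₂) := by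
        rw [← ENNReal.rpow_add _ _ hV₀ hV, hp₂, hq₂]
        congr 2
        ring

theorem lconvolution_le_setLIntegral_ball_add [Nontrivial E] (hp₁ : 1 ≤ p₁) (hs : 0 < s)
    (hq₂ : 1 / q₂ = 1 / q₁ - (1 - 1 / t)) (hf : AEMeasurable f μ) (hk : RadiallyAntitone k)
    (x : E) {R : ℝ} (hR : 0 < R) :
    (f ⋆ₗ[μ] k) x ≤ ∫⁻ y in ball x R, f y * k (x - y) ∂μ +
      (2 ^ Module.finrank ℝ E) ^ (1 - 1 / q₁) *
        (1 - (2 ^ Module.finrank ℝ E) ^ (-(1 / q₂)))⁻¹ *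
        morreyENorm s t k μ * morreyENorm p₁ q₁ f μ * μ (ball 0 R) ^ (-(1 / q₂)) := by
  simp only [lconvolution_def, neg_add_eq_sub]
  rw [← lintegral_add_compl _ (measurableSet_ball (x := x) (ε := R))]
  gcongr
  exact setLIntegral_compl_ball_mul_le hp₁ hs hq₂ hf hk x hR

theorem morreyENorm_lconvolution_le [Nontrivial E] (hp₁ : 1 ≤ p₁) (hs : 1 ≤ s) (hp₂_pos : 0 < p₂)
    (hp₂ : 1 / p₂ = 1 / p₁ - (1 - 1 / s)) (hq₂ : 1 / q₂ = 1 / q₁ - (1 - 1 / t))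
    (hf : AEMeasurable f μ) (hk : AEMeasurable k μ) (hk' : RadiallyAntitone k) :
    morreyENorm p₂ q₂ (f ⋆ₗ[μ] k) μ ≤
      ((2 ^ Module.finrank ℝ E) ^ (1 / p₁ - 1 / q₁) + (2 ^ Module.finrank ℝ E) ^ (1 - 1 / q₁) *
        (1 - (2 ^ Module.finrank ℝ E) ^ (-(1 / q₂)))⁻¹) *
        morreyENorm s t k μ * morreyENorm p₁ q₁ f μ := by
  refine iSup_le fun a ↦ iSup₂_le fun R hR ↦ ?_
  rw [Measure.addHaar_ball_center]
  set V := μ (ball (0 : E) R)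
  set K := morreyENorm s t k μ
  set F := morreyENorm p₁ q₁ f μ
  set D : ℝ≥0∞ := 2 ^ Module.finrank ℝ E
  set G := D ^ (1 - 1 / q₁) * (1 - D ^ (-(1 / q₂)))⁻¹
  set near : E → ℝ≥0∞ := fun x ↦ ∫⁻ y in ball x R, f y * k (x - y) ∂μ with hnear
  set far : ℝ≥0∞ := G * K * F * V ^ (-(1 / q₂))
  have hV₀ : V ≠ 0 := (measure_ball_pos μ _ hR).ne'
  have hV : V ≠ ⊤ := measure_ball_lt_top.ne
  have hs₀ : 0 < s := zero_lt_one.trans_le hs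
  have hp₂₁ : 1 ≤ p₂ := by
    rw [← div_le_one hp₂_pos, hp₂]
    linarith [(div_le_one (zero_lt_one.trans_le hp₁)).2 hp₁, (div_le_one hs₀).2 hs]
  have near_meas : AEMeasurable near μ := by
    simp only [hnear, setLIntegral_ball_mul_eq_lconvolution_indicator]
    exact aemeasurable_lconvolution hf (hk.indicator measurableSet_ball)
  have near_le : eLpNorm' near p₂ (μ.restrict (ball a R)) ≤
      D ^ (1 / p₁ - 1 / q₁) * K * F * V ^ (1 / p₂ - 1 / q₂) :=
    eLpNorm'_setLIntegral_ball_mul_le_morreyENorm_mul hp₁ hs hp₂_pos hp₂ hq₂ hf hk a hR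
  have far_eq : eLpNorm' (fun _ ↦ far) p₂ (μ.restrict (ball a R)) =
      G * K * F * V ^ (1 / p₂ - 1 / q₂) := by
    rw [eLpNorm'_const _ hp₂_pos, Measure.restrict_apply_univ, Measure.addHaar_ball_center,
      enorm_eq_self, mul_assoc, ← ENNReal.rpow_add _ _ hV₀ hV, neg_add_eq_sub]
  calc V ^ (1 / q₂ - 1 / p₂) * eLpNorm' (f ⋆ₗ[μ] k) p₂ (μ.restrict (ball a R))
      ≤ V ^ (1 / q₂ - 1 / p₂) * eLpNorm' (near + fun _ ↦ far) p₂ (μ.restrict (ball a R)) := by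
        gcongr
        exact eLpNorm'_mono_enorm_ae hp₂_pos.le <| .of_forall fun x ↦
          lconvolution_le_setLIntegral_ball_add hp₁ hs₀ hq₂ hf hk' x hR
    _ ≤ V ^ (1 / q₂ - 1 / p₂) * (D ^ (1 / p₁ - 1 / q₁) * K * F * V ^ (1 / p₂ - 1 / q₂) +
          G * K * F * V ^ (1 / p₂ - 1 / q₂)) := by
        gcongr
        refine (eLpNorm'_add_le near_meas.restrict.aestronglyMeasurable
          aestronglyMeasurable_const hp₂₁).trans ?_
        exact add_le_add near_le far_eq.le
    _ = (D ^ (1 / p₁ - 1 / q₁) + G) * K * F *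
          (V ^ (1 / q₂ - 1 / p₂) * V ^ (1 / p₂ - 1 / q₂)) := by ring
    _ = (D ^ (1 / p₁ - 1 / q₁) + G) * K * F := by
        rw [← ENNReal.rpow_add _ _ hV₀ hV, sub_add_sub_cancel, sub_self, ENNReal.rpow_zero, mul_one]

theorem exists_ofReal_eq_two_pow_rpow_add {d : ℕ} (hd : d ≠ 0) (u v : ℝ) {w : ℝ} (hw : w < 0) :
    ∃ C : ℝ, 0 < C ∧
      ENNReal.ofReal C = (2 ^ d : ℝ≥0∞) ^ u + (2 ^ d) ^ v * (1 - (2 ^ d) ^ w)⁻¹ := by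
  have hD₁ : (1 : ℝ≥0∞) < 2 ^ d := one_lt_pow₀ ENNReal.one_lt_two hd
  have hD : (2 ^ d : ℝ≥0∞) ≠ ⊤ := by finiteness
  have gap : 1 - (2 ^ d : ℝ≥0∞) ^ w ≠ 0 :=
    (tsub_pos_of_lt (ENNReal.rpow_lt_one_of_one_lt_of_neg hD₁ hw)).ne'
  have hC : (2 ^ d : ℝ≥0∞) ^ u + (2 ^ d) ^ v * (1 - (2 ^ d) ^ w)⁻¹ ≠ ⊤ := by
    have := ENNReal.rpow_ne_top_of_ne_zero (y := u) (zero_lt_one.trans hD₁).ne' hD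
    have := ENNReal.rpow_ne_top_of_ne_zero (y := v) (zero_lt_one.trans hD₁).ne' hD
    finiteness
  have hC₀ : 0 < (2 ^ d : ℝ≥0∞) ^ u + (2 ^ d) ^ v * (1 - (2 ^ d) ^ w)⁻¹ :=
    add_pos_of_pos_of_nonneg (ENNReal.rpow_pos (zero_lt_one.trans hD₁) hD) zero_le
  exact ⟨_, ENNReal.toReal_pos hC₀.ne' hC, ENNReal.ofReal_toReal hC⟩

theorem besselRiesz_morrey_bounded'_general [Nontrivial E] (μ : Measure E) [μ.IsAddHaarMeasure]
    (hp₁ : 1 ≤ p₁) (hs : 1 ≤ s) (hp₂_pos : 0 < p₂) (hq₂_pos : 0 < q₂)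
    (hp₂ : 1 / p₂ = 1 / p₁ - (1 - 1 / s)) (hq₂ : 1 / q₂ = 1 / q₁ - (1 - 1 / t)) :
    ∃ C : ℝ, 0 < C ∧ ∀ {F : Type*} [NormedAddCommGroup F] [NormedSpace ℝ F] (k : E → ℝ)
      (f : E → F), AEStronglyMeasurable k μ → RadiallyAntitone (fun x ↦ ‖k x‖ₑ) →
      AEStronglyMeasurable f μ →
      morreyENorm p₂ q₂ (fun x ↦ ∫ y, k (x - y) • f y ∂μ) μ ≤
        ENNReal.ofReal C * morreyENorm s t k μ * morreyENorm p₁ q₁ f μ := by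
  obtain ⟨C, hC, hC'⟩ := exists_ofReal_eq_two_pow_rpow_add
    (Module.finrank_pos (R := ℝ) (M := E)).ne' (1 / p₁ - 1 / q₁) (1 - 1 / q₁)
    (neg_neg_of_pos (one_div_pos.2 hq₂_pos))
  refine ⟨C, hC, fun k f hk hk' hf ↦ ?_⟩
  have integral_le (x : E) :
      ‖∫ y, k (x - y) • f y ∂μ‖ₑ ≤ ((fun y ↦ ‖f y‖ₑ) ⋆ₗ[μ] fun y ↦ ‖k y‖ₑ) x := by
    refine (enorm_integral_le_lintegral_enorm _).trans_eq ?_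
    simp only [enorm_smul, lconvolution_def, neg_add_eq_sub, mul_comm]
  rw [hC', ← morreyENorm_enorm s t k, ← morreyENorm_enorm p₁ q₁ f]
  exact (morreyENorm_mono hp₂_pos.le q₂ integral_le).trans
    (morreyENorm_lconvolution_le hp₁ hs hp₂_pos hp₂ hq₂ hf.enorm hk.enorm hk')

end RadialKernel

theorem one_div_sub_one_sub_one_div_pos {n α q t : ℝ} (hα : 0 < α) (hαn : α < n) (hq₀ : 0 < q)
    (hq : q < n / α) (ht₀ : 0 < t) (ht : t < n / (n - α)) : 0 < 1 / q - (1 - 1 / t) := by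
  have hn : 0 < n := hα.trans hαn
  have hq' : α / n < 1 / q := by simpa using one_div_lt_one_div_of_lt hq₀ hq
  have ht' : (n - α) / n < 1 / t := by simpa using one_div_lt_one_div_of_lt ht₀ ht
  rw [sub_div, div_self hn.ne'] at ht'
  linarith

/-- boundedness of `I_{α,γ}` (for `γ > 0`) from `L^{p₁,q₁}` to `L^{p₂,q₂}`
with `‖I_{α,γ} f‖_{L^{p₂,q₂}} ≤ C ‖K_{α,γ}‖_{L^{s,t}} ‖f‖_{L^{p₁,q₁}}`, where
`1 ≤ p₁ ≤ q₁ < n/α`, `1 ≤ s ≤ t`, `n/(n+γ-α) < t < n/(n-α)`,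
`1/p₂ = 1/p₁ - 1/s'`, `1/q₂ = 1/q₁ - 1/t'`. -/
theorem besselRiesz_morrey_bounded' (n : ℕ) (hn : 1 ≤ n) (α γ p₁ q₁ p₂ q₂ s t : ℝ)
    (hα0 : 0 < α) (hαn : α < n) (hγ : 0 < γ)
    (hp₁ : 1 ≤ p₁) (hp₁q₁ : p₁ ≤ q₁) (hq₁ : q₁ < n / α)
    (hs : 1 ≤ s) (hst : s ≤ t)
    (ht1 : (n : ℝ) / (n + γ - α) < t) (ht2 : t < n / (n - α))
    (hp₂ : 1 / p₂ = 1 / p₁ - (1 - 1 / s))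
    (hq₂ : 1 / q₂ = 1 / q₁ - (1 - 1 / t)) :
    ∃ C : ℝ, 0 < C ∧ ∀ f : EuclideanSpace ℝ (Fin n) → ℝ,
      Measurable f → morreyNorm n p₁ q₁ f ≠ ⊤ →
      morreyNorm n p₂ q₂ (besselRiesz n α γ f) ≤
        ENNReal.ofReal C * morreyNorm n s t (besselRieszKernel n α γ) *
          morreyNorm n p₁ q₁ f := by
  have hp₁₀ : 0 < p₁ := by linarith
  have hs₀ : 0 < s := by linarith
  have hq₂inv : 0 < 1 / q₂ :=
    hq₂ ▸ one_div_sub_one_sub_one_div_pos hα0 hαn (by linarith) hq₁ (by linarith) ht2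
  have hp₂inv : 0 < 1 / p₂ := by
    linarith [one_div_le_one_div_of_le hp₁₀ hp₁q₁, one_div_le_one_div_of_le hs₀ hst]
  have hp₂_pos : 0 < p₂ := one_div_pos.1 hp₂inv
  have : Nonempty (Fin n) := ⟨⟨0, hn⟩⟩
  obtain ⟨C, hC, bound⟩ := besselRiesz_morrey_bounded'_general
    (volume : Measure (EuclideanSpace ℝ (Fin n))) hp₁ hs hp₂_pos (one_div_pos.1 hq₂inv) hp₂ hq₂
  refine ⟨C, hC, fun f hf _ ↦ ?_⟩
  simp only [morreyNorm_eq_morreyENorm, hp₁₀, hp₂_pos, hs₀]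
  exact bound (besselRieszKernel n α γ) f
    (measurable_besselRieszKernel n α γ).aestronglyMeasurable
    (radiallyAntitone_enorm_besselRieszKernel hαn.le hγ.le) hf.aestronglyMeasurable
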